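/- The two variational formulas agree: for every x ∈ ℝ and t > 0, v(x,t) = ṽ(x,t), where v is defined by the control formula with running cost λ(w)g_0(w′/λ(w)) and ṽ is defined through the level sets of the passage-time functional Γ. -/

import Mathlib

/-!
Both variational problems are governed by the same family of linear inequalities. For
`σ ∈ [0,1]` put `f(σ) = σ (1 - σ)`. Then `g₀(p) = max_σ (f(σ) - σ p)` (`g0_ge`, `g0_attained`), and
by Cauchy–Schwarz `γ₀(x,y) = inf_σ (y + σ x) / f(σ)` on the wedge (`gamma0_mul_le`, `le_gamma0`).
Hence, for a displacement `x` made in time `τ` at rate `m`, the relation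
`∀ σ, τ m f(σ) - σ x ≤ y` says at once that the cost of the displacement is at most `y` and that
`(x,y)` has passage time at least `τ`.

The rate `λ` is discontinuous, and a `C¹` path may vanish on a complicated set. This is harmless:
the rate is `1` before the first zero `a` and after the last zero `b` of the path, and at least `c`
in between (`exists_zero_split`). Integrating the linear inequalities over these three intervals
(Jensen's inequality, in the forms `cost_integral_ge` and `passage_integral_le`) compares any path
with a broken line of at most three segments whose middle segment stays at `0`, where the rate is
exactly `c`.

* A control `w` with cost `y` gives three wedge vectors `(xᵢ, yᵢ)` with `∑ yᵢ = y` and total passage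
  time at least `t`, so `y` lies in the superlevel set that defines `g` (`mem_level_of_control`).
* Conversely, if `Γ(x - q, y) ≥ t`, a nearly optimal path gives three displacements with times
  `τᵢ` whose sum is nearly `t`. Since the cost is nondecreasing in time, up to an arbitrarily small
  error the times can be adjusted to be positive with sum `t`, and the broken line with these
  times is a control of cost at most `y + ε` (`exists_control`).

Monotonicity and the Lipschitz bound on `v₀` keep both suprema bounded by `v₀(x)`
(`sub_le_of_wedge`).
-/

open Filter Set MeasureTheory intervalIntegral

/-- The Legendre conjugate `g₀` of the TASEP flux `f₀(ρ) = ρ(1−ρ)`: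
`g₀(x) = −x` for `x ≤ −1`, `(1−x)²/4` for `−1 ≤ x ≤ 1`, and `0` for `x ≥ 1`. -/
noncomputable def g0 (x : ℝ) : ℝ :=
  if x ≤ -1 then -x else if x ≤ 1 then (1 - x) ^ 2 / 4 else 0

/-- The macroscopic rate profile: `λ(x) = 1` for `x ≠ 0` and `λ(0) = c`. -/
noncomputable def lam (c : ℝ) (x : ℝ) : ℝ := if x = 0 then c else 1

/-- `w` is piecewise `C¹` on `[a,b]`: continuous on `[a,b]` and `C¹` on each cell of
some finite partition `a = p 0 < p 1 < ⋯ < p k = b`. -/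
def PiecewiseC1On (w : ℝ → ℝ) (a b : ℝ) : Prop :=
  ContinuousOn w (Set.Icc a b) ∧
    ∃ (k : ℕ) (p : ℕ → ℝ), p 0 = a ∧ p k = b ∧ (∀ i < k, p i < p (i + 1)) ∧
      ∀ i < k, ContDiffOn ℝ 1 w (Set.Icc (p i) (p (i + 1)))

/-- The running cost `∫₀ᵗ λ(w(s)) g₀(w′(s)/λ(w(s))) ds` of a path `w : [0,t] → ℝ`. -/
noncomputable def pathCost (c t : ℝ) (w : ℝ → ℝ) : ℝ :=
  ∫ s in (0 : ℝ)..t, lam c (w s) * g0 (deriv w s / lam c (w s))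

/-- The variational (Hopf–Lax type) solution
`v(x,t) = sup { v₀(w(0)) − ∫₀ᵗ λ(w(s)) g₀(w′(s)/λ(w(s))) ds : w piecewise C¹, w(t) = x }`. -/
noncomputable def vVar (c : ℝ) (v0 : ℝ → ℝ) (x t : ℝ) : ℝ :=
  sSup { a | ∃ w : ℝ → ℝ, PiecewiseC1On w 0 t ∧ w t = x ∧ a = v0 (w 0) - pathCost c t w }

/-- The optimal control cost
`I(x,t,q) = inf { ∫₀ᵗ λ(w(s)) g₀(w′(s)/λ(w(s))) ds : w piecewise C¹, w(0) = q, w(t) = x }`. -/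
noncomputable def Icost (c : ℝ) (x t q : ℝ) : ℝ :=
  sInf { a | ∃ w : ℝ → ℝ, PiecewiseC1On w 0 t ∧ w 0 = q ∧ w t = x ∧ a = pathCost c t w }

/-- The continuum wedge `𝒱 = {(x,y) ∈ ℝ² : y ≥ 0, x ≥ −y}`. -/
def WedgeV : Set (ℝ × ℝ) := { p | 0 ≤ p.2 ∧ -p.2 ≤ p.1 }

/-- The homogeneous shape function `γ₀(x,y) = (√(x+y) + √y)²`. -/
noncomputable def gamma0 (p : ℝ × ℝ) : ℝ := (Real.sqrt (p.1 + p.2) + Real.sqrt p.2) ^ 2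

/-- `f : [a,b] → ℝ²` is piecewise `C¹`: continuous on `[a,b]` and `C¹` on each cell of
some finite partition `a = p 0 < p 1 < ⋯ < p k = b`. -/
def PiecewiseC1PathOn (f : ℝ → ℝ × ℝ) (a b : ℝ) : Prop :=
  ContinuousOn f (Set.Icc a b) ∧
    ∃ (k : ℕ) (p : ℕ → ℝ), p 0 = a ∧ p k = b ∧ (∀ i < k, p i < p (i + 1)) ∧
      ∀ i < k, ContDiffOn ℝ 1 f (Set.Icc (p i) (p (i + 1)))

/-- The macroscopic passage-time functional
`Γ^q(x,y) = sup ∫₀¹ γ₀(𝐱′(s))/λ(x₁(s) − q) ds` over piecewise `C¹` paths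
`𝐱 : [0,1] → 𝒱` with `𝐱(0) = (0,0)`, `𝐱(1) = (x,y)` and `𝐱′(s) ∈ 𝒱`. -/
noncomputable def GammaQ (c q x y : ℝ) : ℝ :=
  sSup { a | ∃ f : ℝ → ℝ × ℝ, PiecewiseC1PathOn f 0 1 ∧ f 0 = (0, 0) ∧ f 1 = (x, y) ∧
    (∀ s ∈ Set.Icc (0 : ℝ) 1, f s ∈ WedgeV) ∧
    (∀ s ∈ Set.Icc (0 : ℝ) 1, deriv f s ∈ WedgeV) ∧
    a = ∫ s in (0 : ℝ)..1, gamma0 (deriv f s) / lam c ((f s).1 - q) }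

/-- The level-set function `g^q(x,t) = inf { y : (x,y) ∈ 𝒱, Γ^q(x,y) ≥ t }`. -/
noncomputable def gLevel (c q x t : ℝ) : ℝ :=
  sInf { y | ((x, y) : ℝ × ℝ) ∈ WedgeV ∧ t ≤ GammaQ c q x y }

/-! ### Piecewise `C¹` functions and broken lines -/

/-- `f : [a,b] → E` is piecewise `C¹`; common form of `PiecewiseC1On` and `PiecewiseC1PathOn`. -/
def PC1 {E : Type*} [NormedAddCommGroup E] [NormedSpace ℝ E] (f : ℝ → E) (a b : ℝ) : Prop :=
  ContinuousOn f (Set.Icc a b) ∧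
    ∃ (k : ℕ) (p : ℕ → ℝ), p 0 = a ∧ p k = b ∧ (∀ i < k, p i < p (i + 1)) ∧
      ∀ i < k, ContDiffOn ℝ 1 f (Set.Icc (p i) (p (i + 1)))

section Calculus

variable {E : Type*} [NormedAddCommGroup E] [NormedSpace ℝ E]

lemma contDiffOn_Icc_bound {f : ℝ → E} {a b : ℝ} (hab : a < b)
    (hf : ContDiffOn ℝ 1 f (Icc a b)) :
    ∃ C : ℝ, ∀ s ∈ Ioo a b, DifferentiableAt ℝ f s ∧ ‖deriv f s‖ ≤ C := by
  have hcont := hf.continuousOn_derivWithin (uniqueDiffOn_Icc hab) le_rfl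
  obtain ⟨C, hC⟩ := isCompact_Icc.exists_bound_of_continuousOn hcont
  refine ⟨C, fun s hs => ?_⟩
  have hd : DifferentiableAt ℝ f s :=
    ((hf.differentiableOn one_ne_zero) s (Ioo_subset_Icc_self hs)).differentiableAt
      (Icc_mem_nhds hs.1 hs.2)
  refine ⟨hd, ?_⟩
  rw [← hd.derivWithin (uniqueDiffOn_Icc hab s (Ioo_subset_Icc_self hs))]
  exact hC s (Ioo_subset_Icc_self hs)

/-- Off a finite set, a piecewise `C¹` function is differentiable with bounded derivative. -/
lemma PC1.exists_bound {f : ℝ → E} {a b : ℝ} (hf : PC1 f a b) :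
    ∃ S : Set ℝ, S.Finite ∧ ∃ C : ℝ, 0 ≤ C ∧ ∀ s ∈ Icc a b, s ∉ S →
      DifferentiableAt ℝ f s ∧ ‖deriv f s‖ ≤ C := by
  obtain ⟨-, k, p, rfl, rfl, hlt, hC⟩ := hf
  suffices H : ∀ j ≤ k, ∃ S : Set ℝ, S.Finite ∧ ∃ C : ℝ, 0 ≤ C ∧ ∀ s ∈ Icc (p 0) (p j), s ∉ S →
      DifferentiableAt ℝ f s ∧ ‖deriv f s‖ ≤ C from H k le_rfl
  intro j
  induction j with
  | zero =>
    intro _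
    refine ⟨{p 0}, finite_singleton _, 0, le_rfl, fun s hs hs' => ?_⟩
    exact absurd (le_antisymm hs.2 hs.1) hs'
  | succ j ih =>
    intro hj
    obtain ⟨S, hS, C, hC0, h⟩ := ih (by omega)
    obtain ⟨D, hD⟩ := contDiffOn_Icc_bound (hlt j (by omega)) (hC j (by omega))
    refine ⟨S ∪ {p j, p (j + 1)}, hS.union (by simp), max C D, le_max_of_le_left hC0,
      fun s hs hs' => ?_⟩
    simp only [mem_union, mem_insert_iff, mem_singleton_iff, not_or] at hs'
    rcases le_or_gt s (p j) with hle | hgt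
    · obtain ⟨h1, h2⟩ := h s ⟨hs.1, hle⟩ hs'.1
      exact ⟨h1, h2.trans (le_max_left _ _)⟩
    · obtain ⟨h1, h2⟩ := hD s ⟨hgt, lt_of_le_of_ne hs.2 hs'.2.2⟩
      exact ⟨h1, h2.trans (le_max_right _ _)⟩

/-- Integrands of linear growth in the derivative are integrable along a piecewise `C¹` function. -/
lemma PC1.intervalIntegrable {f : ℝ → E} {a b : ℝ} (hf : PC1 f a b) {F : ℝ → ℝ}
    (hF : AEStronglyMeasurable F (volume.restrict (Icc a b))) {K : ℝ} (hK0 : 0 ≤ K)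
    (hK : ∀ s ∈ Icc a b, |F s| ≤ K * (1 + ‖deriv f s‖))
    {α β : ℝ} (hα : a ≤ α) (hαβ : α ≤ β) (hβ : β ≤ b) :
    IntervalIntegrable F volume α β := by
  obtain ⟨S, hS, C, hC0, h⟩ := hf.exists_bound
  have hint : IntegrableOn F (Icc a b) := by
    refine ⟨hF, .restrict_of_bounded (C := K * (1 + C)) measure_Icc_lt_top ?_⟩
    have hSae : ∀ᵐ s ∂(volume.restrict (Icc a b)), s ∉ S :=
      ae_restrict_of_ae (hS.countable.ae_notMem volume)
    filter_upwards [hSae, ae_restrict_mem measurableSet_Icc] with s hs hsI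
    rw [Real.norm_eq_abs]
    refine (hK s hsI).trans ?_
    have := (h s hsI hs).2
    gcongr
  rw [intervalIntegrable_iff_integrableOn_Ioc_of_le hαβ]
  exact hint.mono_set (fun s hs => ⟨hα.trans hs.1.le, hs.2.trans hβ⟩)

lemma PC1.integrable_clm {f : ℝ → E} [CompleteSpace E] {a b : ℝ} (hf : PC1 f a b)
    (L : E →L[ℝ] ℝ) {α β : ℝ} (hα : a ≤ α) (hαβ : α ≤ β) (hβ : β ≤ b) :
    IntervalIntegrable (fun s => L (deriv f s)) volume α β := by
  refine hf.intervalIntegrable (K := ‖L‖) ?_ (norm_nonneg _) (fun s _ => ?_) hα hαβ hβ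
  · exact L.continuous.comp_aestronglyMeasurable (aestronglyMeasurable_deriv f _)
  · rw [← Real.norm_eq_abs]
    refine (L.le_opNorm _).trans ?_
    gcongr
    linarith

/-- Fundamental theorem of calculus for a linear functional of a piecewise `C¹` function. -/
lemma PC1.ftc {f : ℝ → E} [CompleteSpace E] {a b : ℝ} (hf : PC1 f a b)
    (L : E →L[ℝ] ℝ) {α β : ℝ} (hα : a ≤ α) (hαβ : α ≤ β) (hβ : β ≤ b) :
    ∫ s in α..β, L (deriv f s) = L (f β) - L (f α) := by
  obtain ⟨S, hS, C, hC0, h⟩ := hf.exists_bound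
  have hsub : Icc α β ⊆ Icc a b := Icc_subset_Icc hα hβ
  refine MeasureTheory.integral_eq_of_hasDerivAt_off_countable_of_le (fun s => L (f s)) _ hαβ
    hS.countable (L.continuous.comp_continuousOn (hf.1.mono hsub)) ?_
    (hf.integrable_clm L hα hαβ hβ)
  intro s hs
  have := (h s (hsub (Ioo_subset_Icc_self hs.1)) hs.2).1.hasDerivAt
  exact L.hasFDerivAt.comp_hasDerivAt s this

/-- On a cell where `f` is affine with slope `v`, the total function `deriv f` is `v`, or `0` when
`f` has a corner at an endpoint of the cell. -/
lemma deriv_of_affine {f : ℝ → E} {α β : ℝ} (hαβ : α < β) {e v : E}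
    (hf : ∀ s ∈ Icc α β, f s = e + s • v) {s : ℝ} (hs : s ∈ Icc α β) :
    (s ∈ Ioo α β → deriv f s = v) ∧ (deriv f s = v ∨ deriv f s = 0) := by
  have haff : HasDerivAt (fun s : ℝ => e + s • v) v s := by
    simpa using ((hasDerivAt_id s).smul_const v).const_add e
  constructor
  · intro hs'
    have : f =ᶠ[nhds s] fun s : ℝ => e + s • v := by
      filter_upwards [Icc_mem_nhds hs'.1 hs'.2] with r hr using hf r hr
    rw [this.deriv_eq]
    exact haff.deriv
  · by_cases hd : DifferentiableAt ℝ f s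
    · left
      have hu := uniqueDiffOn_Icc hαβ s hs
      rw [← hd.derivWithin hu, derivWithin_congr hf (hf s hs)]
      exact haff.hasDerivWithinAt.derivWithin hu
    · right
      exact deriv_zero_of_not_differentiableAt hd

/-- The function that rises with unit slope from `0` to `b - a` on `[a,b]` and is constant
elsewhere. -/
noncomputable def ramp (a b s : ℝ) : ℝ := max a (min b s) - a

lemma ramp_left {a b s : ℝ} (hs : s ≤ a) : ramp a b s = 0 := by
  simp [ramp, hs]

lemma ramp_mid {a b s : ℝ} (hs : s ∈ Icc a b) : ramp a b s = s - a := by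
  simp [ramp, hs.1, hs.2]

lemma ramp_right {a b s : ℝ} (hab : a ≤ b) (hs : b ≤ s) : ramp a b s = b - a := by
  simp [ramp, hab, hs]

/-- The broken line starting at `e` with slopes `v₁, v₂, v₃` on `[0,t₁], [t₁,t₂], [t₂,t₃]`. -/
noncomputable def threeLine (e v₁ v₂ v₃ : E) (t₁ t₂ t₃ s : ℝ) : E :=
  e + ramp 0 t₁ s • v₁ + ramp t₁ t₂ s • v₂ + ramp t₂ t₃ s • v₃

section ThreeLine

variable {e v₁ v₂ v₃ : E} {t₁ t₂ t₃ : ℝ}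

lemma threeLine_cell₁ (h₂ : t₁ < t₂) {s : ℝ} (hs : s ∈ Icc 0 t₁) :
    threeLine e v₁ v₂ v₃ t₁ t₂ t₃ s = e + s • v₁ := by
  rw [threeLine, ramp_mid hs, ramp_left hs.2, ramp_left (hs.2.trans h₂.le)]
  simp

lemma threeLine_cell₂ (h₁ : 0 < t₁) {s : ℝ} (hs : s ∈ Icc t₁ t₂) :
    threeLine e v₁ v₂ v₃ t₁ t₂ t₃ s = (e + t₁ • v₁ - t₁ • v₂) + s • v₂ := by
  rw [threeLine, ramp_right h₁.le hs.1, ramp_mid hs, ramp_left hs.2]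
  module

lemma threeLine_cell₃ (h₁ : 0 < t₁) (h₂ : t₁ < t₂) {s : ℝ} (hs : s ∈ Icc t₂ t₃) :
    threeLine e v₁ v₂ v₃ t₁ t₂ t₃ s
      = (e + t₁ • v₁ + (t₂ - t₁) • v₂ - t₂ • v₃) + s • v₃ := by
  rw [threeLine, ramp_right h₁.le (h₂.le.trans hs.1), ramp_right h₂.le hs.1, ramp_mid hs]
  module

lemma threeLine_pc1 (h₁ : 0 < t₁) (h₂ : t₁ < t₂) (h₃ : t₂ < t₃) :
    PC1 (threeLine e v₁ v₂ v₃ t₁ t₂ t₃) 0 t₃ := by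
  refine ⟨?_, 3, fun i => if i = 0 then 0 else if i = 1 then t₁ else if i = 2 then t₂ else t₃,
    by simp, by simp, ?_, ?_⟩
  · unfold threeLine ramp
    fun_prop
  · intro i hi
    interval_cases i <;> simpa
  · have haff : ∀ (e v : E) (S : Set ℝ), ContDiffOn ℝ 1 (fun s : ℝ => e + s • v) S :=
      fun e v S => by fun_prop
    intro i hi
    interval_cases i
    · simpa using (haff _ _ _).congr (fun s hs => threeLine_cell₁ h₂ hs)
    · simpa using (haff _ _ _).congr (fun s hs => threeLine_cell₂ h₁ hs)
    · simpa using (haff _ _ _).congr (fun s hs => threeLine_cell₃ h₁ h₂ hs)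

lemma threeLine_deriv (h₁ : 0 < t₁) (h₂ : t₁ < t₂) (h₃ : t₂ < t₃) {s : ℝ}
    (hs : s ∈ Icc 0 t₃) :
    deriv (threeLine e v₁ v₂ v₃ t₁ t₂ t₃) s ∈ ({v₁, v₂, v₃, 0} : Set E) := by
  simp only [mem_insert_iff, mem_singleton_iff]
  rcases le_total s t₁ with h | h
  · have := (deriv_of_affine h₁ (fun s hs => threeLine_cell₁ (e := e) (v₁ := v₁) (v₂ := v₂)
      (v₃ := v₃) (t₃ := t₃) h₂ hs) ⟨hs.1, h⟩).2
    tauto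
  rcases le_total s t₂ with h' | h'
  · have := (deriv_of_affine h₂ (fun s hs => threeLine_cell₂ (e := e) (v₁ := v₁) (v₂ := v₂)
      (v₃ := v₃) (t₃ := t₃) h₁ hs) ⟨h, h'⟩).2
    tauto
  · have := (deriv_of_affine h₃ (fun s hs => threeLine_cell₃ (e := e) (v₁ := v₁) (v₂ := v₂)
      (v₃ := v₃) (t₃ := t₃) h₁ h₂ hs) ⟨h', hs.2⟩).2
    tauto

end ThreeLine

end Calculus

/-! ### Pointwise inequalities -/

lemma g0_ge (p : ℝ) {σ : ℝ} (hσ : σ ∈ Icc (0 : ℝ) 1) : σ * (1 - σ) - σ * p ≤ g0 p := by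
  obtain ⟨h0, h1⟩ := hσ
  unfold g0
  split_ifs with h h'
  · nlinarith [mul_nonneg h0 (sub_nonneg.2 h1), mul_nonneg (sub_nonneg.2 h1) 
      (by linarith : 0 ≤ -1 - p)]
  · nlinarith [sq_nonneg (1 - p - 2 * σ)]
  · nlinarith [mul_nonneg h0 (by linarith : 0 ≤ p - 1)]

lemma g0_attained (p : ℝ) : ∃ σ ∈ Icc (0 : ℝ) 1, g0 p = σ * (1 - σ) - σ * p := by
  unfold g0
  split_ifs with h h'
  · exact ⟨1, by simp, by ring⟩
  · exact ⟨(1 - p) / 2, ⟨by linarith, by linarith⟩, by ring⟩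
  · exact ⟨0, by simp, by ring⟩

lemma g0_le (p : ℝ) : g0 p ≤ 1 + |p| := by
  obtain ⟨σ, ⟨h0, h1⟩, h⟩ := g0_attained p
  rw [h]
  have := neg_abs_le p
  have := abs_nonneg p
  nlinarith

lemma g0_nonneg (p : ℝ) : 0 ≤ g0 p := by simpa using g0_ge p (σ := 0) (by simp)

lemma g0_measurable : Measurable g0 := by
  unfold g0
  refine Measurable.ite measurableSet_Iic (by fun_prop)
    (Measurable.ite measurableSet_Iic (by fun_prop) (by fun_prop))

lemma lam_measurable (c : ℝ) : Measurable (lam c) := by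
  unfold lam
  exact Measurable.ite (measurableSet_singleton _) measurable_const measurable_const

section Lam

variable {c : ℝ} (hc : c ∈ Ioc (0 : ℝ) 1)

include hc

lemma lam_ge (x : ℝ) : c ≤ lam c x := by
  unfold lam; split_ifs; exacts [le_rfl, hc.2]

lemma lam_pos (x : ℝ) : 0 < lam c x := hc.1.trans_le (lam_ge hc x)

lemma lam_le (x : ℝ) : lam c x ≤ 1 := by
  unfold lam; split_ifs; exacts [hc.2, le_rfl]

end Lam

/-- The running cost `l g₀(p / l)` at rate `l ≥ m` lies above the supporting lines of the cost at
rate `m`. -/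
lemma cost_ge {l m p σ : ℝ} (hl : 0 < l) (hm : m ≤ l) (hσ : σ ∈ Icc (0 : ℝ) 1) :
    m * (σ * (1 - σ)) - σ * p ≤ l * g0 (p / l) := by
  have h := mul_le_mul_of_nonneg_left (g0_ge (p / l) hσ) hl.le
  have e : l * (σ * (1 - σ) - σ * (p / l)) = l * (σ * (1 - σ)) - σ * p := by
    field_simp
  have := mul_le_mul_of_nonneg_right hm (mul_nonneg hσ.1 (sub_nonneg.2 hσ.2))
  linarith

/-- The running cost is nondecreasing in the rate, stated through the supporting lines. -/
lemma cost_le {l m p Y : ℝ} (hl : 0 < l) (hm : l ≤ m)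
    (hY : ∀ σ ∈ Icc (0 : ℝ) 1, m * (σ * (1 - σ)) - σ * p ≤ Y) : l * g0 (p / l) ≤ Y := by
  obtain ⟨σ, hσ, h⟩ := g0_attained (p / l)
  refine le_trans ?_ (hY σ hσ)
  have e : l * (σ * (1 - σ) - σ * (p / l)) = l * (σ * (1 - σ)) - σ * p := by
    field_simp
  have := mul_le_mul_of_nonneg_right hm (mul_nonneg hσ.1 (sub_nonneg.2 hσ.2))
  rw [h, e]
  linarith

lemma gamma0_nonneg (d : ℝ × ℝ) : 0 ≤ gamma0 d := sq_nonneg _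

lemma gamma0_measurable : Measurable gamma0 := by
  unfold gamma0
  fun_prop

lemma gamma0_smul {r : ℝ} (hr : 0 ≤ r) (d : ℝ × ℝ) : gamma0 (r • d) = r * gamma0 d := by
  unfold gamma0
  simp only [Prod.smul_fst, Prod.smul_snd, smul_eq_mul]
  rw [← mul_add, Real.sqrt_mul hr, Real.sqrt_mul hr, ← mul_add, mul_pow, Real.sq_sqrt hr]

/-- Cauchy–Schwarz: `γ₀(x,y) = inf_σ (y + σ x) / (σ (1 - σ))`, the inequality `≤`. -/
lemma gamma0_mul_le {d : ℝ × ℝ} (hd : d ∈ WedgeV) (σ : ℝ) :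
    gamma0 d * (σ * (1 - σ)) ≤ d.2 + σ * d.1 := by
  obtain ⟨h1, h2⟩ := hd
  have ha := Real.sq_sqrt (show 0 ≤ d.1 + d.2 by linarith)
  have hb := Real.sq_sqrt h1
  unfold gamma0
  set a := √(d.1 + d.2)
  set b := √d.2
  have e : d.2 + σ * d.1 = (1 - σ) * b ^ 2 + σ * a ^ 2 := by rw [ha, hb]; ring
  rw [e]
  nlinarith [sq_nonneg (σ * a - (1 - σ) * b)]

/-- The inequality `≥` in `γ₀(x,y) = inf_σ (y + σ x) / (σ (1 - σ))`. -/
lemma le_gamma0 {m x y : ℝ}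
    (h : ∀ σ ∈ Icc (0 : ℝ) 1, m * (σ * (1 - σ)) - σ * x ≤ y) : m ≤ gamma0 (x, y) := by
  have hy : 0 ≤ y := by simpa using h 0 (by simp)
  have hxy : 0 ≤ x + y := by
    have := h 1 (by simp)
    norm_num at this
    linarith
  have ha := Real.sq_sqrt hxy
  have hb := Real.sq_sqrt hy
  have ha0 := Real.sqrt_nonneg (x + y)
  have hb0 := Real.sqrt_nonneg y
  unfold gamma0
  simp only
  set a := √(x + y)
  set b := √y
  have hx : x = a ^ 2 - b ^ 2 := by linarith
  by_contra! hlt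
  have hmpos : 0 < m := lt_of_le_of_lt (sq_nonneg _) hlt
  rcases hb0.eq_or_lt with hbz | hbz
  -- `y = 0`: the infimum is approached as `σ → 0`
  · rw [← hbz] at hlt hx hb
    have hk : 0 < (m - x) / (2 * m) := by apply div_pos <;> nlinarith
    have hk1 : (m - x) / (2 * m) ≤ 1 := by rw [div_le_one (by linarith)]; nlinarith
    have := h _ ⟨hk.le, hk1⟩
    set k := (m - x) / (2 * m)
    have hmk : 2 * (m * k) = m - x := by simp only [k]; field_simp
    have : k * (m - x - m * k) ≤ 0 := by nlinarith
    nlinarith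
  rcases ha0.eq_or_lt with haz | haz
  -- `x + y = 0`: the infimum is approached as `σ → 1`
  · rw [← haz] at hlt hx ha
    have hk : 0 < (m - y) / (2 * m) := by apply div_pos <;> nlinarith
    have hk1 : (m - y) / (2 * m) ≤ 1 := by rw [div_le_one (by linarith)]; nlinarith
    have := h (1 - (m - y) / (2 * m)) ⟨by linarith, by linarith⟩
    set k := (m - y) / (2 * m)
    have hmk : 2 * (m * k) = m - y := by simp only [k]; field_simp
    have hxy' : x = -y := by linarith
    rw [hxy'] at this
    have : k * (m - y - m * k) ≤ 0 := by nlinarith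
    nlinarith
  -- the infimum is attained at `σ = b / (a + b)`
  · have hab : 0 < a + b := by linarith
    have := h (b / (a + b)) ⟨by positivity, by rw [div_le_one hab]; linarith⟩
    have e1 : 1 - b / (a + b) = a / (a + b) := by field_simp; ring
    have e2 : b / (a + b) * x = b * (a - b) := by rw [hx]; field_simp; ring
    have e3 : (a + b) ^ 2 * (b / (a + b) * (a / (a + b))) = a * b := by field_simp
    rw [e1, e2] at this
    have hp : 0 < b / (a + b) * (a / (a + b)) := by positivity
    nlinarith [mul_lt_mul_of_pos_right hlt hp]

lemma gamma0_div_mul_le {d : ℝ × ℝ} (hd : d ∈ WedgeV) {σ l m : ℝ} (hσ : σ ∈ Icc (0 : ℝ) 1)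
    (hm : 0 < m) (hml : m ≤ l) :
    gamma0 d / l * (m * (σ * (1 - σ))) ≤ d.2 + σ * d.1 := by
  refine le_trans ?_ (gamma0_mul_le hd σ)
  have hl := hm.trans_le hml
  have h0 : 0 ≤ σ * (1 - σ) := mul_nonneg hσ.1 (sub_nonneg.2 hσ.2)
  have : gamma0 d / l * (m * (σ * (1 - σ))) = gamma0 d * (σ * (1 - σ)) * (m / l) := by
    field_simp
  rw [this]
  exact mul_le_of_le_one_right (mul_nonneg (gamma0_nonneg d) h0) ((div_le_one hl).2 hml)

/-! ### Integral inequalities on a cell -/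

section Integrals

variable {c : ℝ} (hc : c ∈ Ioc (0 : ℝ) 1)

include hc

lemma cost_integrable {w : ℝ → ℝ} {T : ℝ} (hw : PC1 w 0 T) {α β : ℝ} (hα : 0 ≤ α)
    (hαβ : α ≤ β) (hβ : β ≤ T) :
    IntervalIntegrable (fun s => lam c (w s) * g0 (deriv w s / lam c (w s))) volume α β := by
  refine hw.intervalIntegrable (K := 1) ?_ zero_le_one (fun s _ => ?_) hα hαβ hβ
  · have h1 : AEMeasurable (fun s => lam c (w s)) (volume.restrict (Icc 0 T)) :=
      (lam_measurable c).comp_aemeasurable (hw.1.aemeasurable measurableSet_Icc)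
    have h2 : AEMeasurable (deriv w) (volume.restrict (Icc 0 T)) :=
      (measurable_deriv w).aemeasurable
    exact (h1.mul (g0_measurable.comp_aemeasurable (h2.div h1))).aestronglyMeasurable
  · have hl := lam_pos hc (w s)
    have hl1 := lam_le hc (w s)
    rw [abs_of_nonneg (mul_nonneg hl.le (g0_nonneg _)), one_mul, Real.norm_eq_abs]
    have h := mul_le_mul_of_nonneg_left (g0_le (deriv w s / lam c (w s))) hl.le
    have e : lam c (w s) * (1 + |deriv w s / lam c (w s)|) = lam c (w s) + |deriv w s| := by
      rw [abs_div, abs_of_pos hl]; field_simp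
    linarith

lemma passage_integrable {f : ℝ → ℝ × ℝ} (q : ℝ) (hf : PC1 f 0 1)
    (hV : ∀ s ∈ Icc (0 : ℝ) 1, deriv f s ∈ WedgeV) {α β : ℝ} (hα : 0 ≤ α)
    (hαβ : α ≤ β) (hβ : β ≤ 1) :
    IntervalIntegrable (fun s => gamma0 (deriv f s) / lam c ((f s).1 - q)) volume α β := by
  refine hf.intervalIntegrable (K := 6 / c) ?_ (by have := hc.1; positivity) (fun s hs => ?_)
    hα hαβ hβ
  · have h1 : AEMeasurable (fun s => lam c ((f s).1 - q)) (volume.restrict (Icc 0 1)) :=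
      (lam_measurable c).comp_aemeasurable
        ((hf.1.fst.sub continuousOn_const).aemeasurable measurableSet_Icc)
    have h2 : AEMeasurable (deriv f) (volume.restrict (Icc 0 1)) :=
      (measurable_deriv f).aemeasurable
    exact ((gamma0_measurable.comp_aemeasurable h2).div h1).aestronglyMeasurable
  · have hl := lam_pos hc ((f s).1 - q)
    rw [abs_of_nonneg (div_nonneg (gamma0_nonneg _) hl.le)]
    have h := gamma0_div_mul_le (hV s hs) (σ := 1 / 2) (by norm_num) hc.1
      (lam_ge hc ((f s).1 - q))
    have h1 : (deriv f s).1 ≤ ‖deriv f s‖ := (le_abs_self _).trans (norm_fst_le (deriv f s))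
    have h2 : (deriv f s).2 ≤ ‖deriv f s‖ := (le_abs_self _).trans (norm_snd_le (deriv f s))
    have h3 := norm_nonneg (deriv f s)
    rw [div_mul_eq_mul_div, le_div_iff₀ hc.1]
    linarith

/-- Jensen's inequality for the running cost, in the dual form given by the supporting line of
slope `σ`. -/
lemma cost_integral_ge {w : ℝ → ℝ} {T : ℝ} (hw : PC1 w 0 T) {α β m σ : ℝ} (hα : 0 ≤ α)
    (hαβ : α ≤ β) (hβ : β ≤ T) (hm : ∀ s ∈ Ioo α β, m ≤ lam c (w s))
    (hσ : σ ∈ Icc (0 : ℝ) 1) :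
    (β - α) * m * (σ * (1 - σ)) - σ * (w β - w α)
      ≤ ∫ s in α..β, lam c (w s) * g0 (deriv w s / lam c (w s)) := by
  have hL := hw.ftc (ContinuousLinearMap.id ℝ ℝ) hα hαβ hβ
  have hLi := hw.integrable_clm (ContinuousLinearMap.id ℝ ℝ) hα hαβ hβ
  simp only [ContinuousLinearMap.coe_id', id_eq] at hL hLi
  have key : ∫ s in α..β, (m * (σ * (1 - σ)) - σ * deriv w s)
      ≤ ∫ s in α..β, lam c (w s) * g0 (deriv w s / lam c (w s)) := by
    refine intervalIntegral.integral_mono_on_of_le_Ioo hαβ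
      (intervalIntegrable_const.sub (hLi.const_mul σ)) (cost_integrable hc hw hα hαβ hβ) ?_
    intro s hs
    exact cost_ge (lam_pos hc _) (hm s hs) hσ
  rw [intervalIntegral.integral_sub intervalIntegrable_const (hLi.const_mul σ),
    intervalIntegral.integral_const, intervalIntegral.integral_const_mul, hL, smul_eq_mul] at key
  linarith

/-- On a cell of constant velocity `v` and rate at most `l`, the cost is bounded by any `Y` that
dominates the supporting lines of the cost at rate `l`: the cost increases with the rate. -/
lemma cost_integral_le {w : ℝ → ℝ} {T : ℝ} (hw : PC1 w 0 T) {α β l v Y : ℝ} (hα : 0 ≤ α)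
    (hαβ : α < β) (hβ : β ≤ T) (hv : ∀ s ∈ Ioo α β, deriv w s = v)
    (hl : ∀ s ∈ Ioo α β, lam c (w s) ≤ l)
    (hY : ∀ σ ∈ Icc (0 : ℝ) 1, (β - α) * l * (σ * (1 - σ)) - σ * ((β - α) * v) ≤ Y) :
    ∫ s in α..β, lam c (w s) * g0 (deriv w s / lam c (w s)) ≤ Y := by
  have hpos : 0 < β - α := sub_pos.2 hαβ
  have key : ∫ s in α..β, lam c (w s) * g0 (deriv w s / lam c (w s))
      ≤ ∫ _s in α..β, Y / (β - α) := by
    refine intervalIntegral.integral_mono_on_of_le_Ioo hαβ.le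
      (cost_integrable hc hw hα hαβ.le hβ) intervalIntegrable_const ?_
    intro s hs
    rw [hv s hs]
    refine cost_le (lam_pos hc _) (hl s hs) (fun σ hσ => ?_)
    rw [le_div_iff₀ hpos]
    linarith [hY σ hσ]
  rwa [intervalIntegral.integral_const, smul_eq_mul, mul_div_cancel₀ _ hpos.ne'] at key

/-- Jensen's inequality for the passage time, in dual form. -/
lemma passage_integral_le {f : ℝ → ℝ × ℝ} (q : ℝ) (hf : PC1 f 0 1)
    (hV : ∀ s ∈ Icc (0 : ℝ) 1, deriv f s ∈ WedgeV) {α β m σ : ℝ} (hα : 0 ≤ α)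
    (hαβ : α ≤ β) (hβ : β ≤ 1) (hm0 : 0 < m) (hm : ∀ s ∈ Ioo α β, m ≤ lam c ((f s).1 - q))
    (hσ : σ ∈ Icc (0 : ℝ) 1) :
    (∫ s in α..β, gamma0 (deriv f s) / lam c ((f s).1 - q)) * m * (σ * (1 - σ))
        - σ * ((f β).1 - (f α).1) ≤ (f β).2 - (f α).2 := by
  let L : ℝ × ℝ →L[ℝ] ℝ := ContinuousLinearMap.snd ℝ ℝ ℝ + σ • ContinuousLinearMap.fst ℝ ℝ ℝ
  have hL := hf.ftc L hα hαβ hβ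
  have hLi := hf.integrable_clm L hα hαβ hβ
  have hLe : ∀ d : ℝ × ℝ, L d = d.2 + σ * d.1 := fun d => by simp [L]
  simp only [hLe] at hL hLi
  have hint := passage_integrable hc q hf hV hα hαβ hβ
  have key : ∫ s in α..β, gamma0 (deriv f s) / lam c ((f s).1 - q) * (m * (σ * (1 - σ)))
      ≤ ∫ s in α..β, ((deriv f s).2 + σ * (deriv f s).1) := by
    refine intervalIntegral.integral_mono_on_of_le_Ioo hαβ (hint.mul_const _) hLi ?_
    intro s hs
    exact gamma0_div_mul_le (hV s ⟨hα.trans hs.1.le, hs.2.le.trans hβ⟩) hσ hm0 (hm s hs)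
  rw [intervalIntegral.integral_mul_const, hL] at key
  linarith

lemma passage_integral_ge {f : ℝ → ℝ × ℝ} (q : ℝ) (hf : PC1 f 0 1)
    (hV : ∀ s ∈ Icc (0 : ℝ) 1, deriv f s ∈ WedgeV) {α β l : ℝ} {v : ℝ × ℝ} (hα : 0 ≤ α)
    (hαβ : α ≤ β) (hβ : β ≤ 1) (hv : ∀ s ∈ Ioo α β, deriv f s = v)
    (hl : ∀ s ∈ Ioo α β, lam c ((f s).1 - q) ≤ l) :
    (β - α) * (gamma0 v / l) ≤ ∫ s in α..β, gamma0 (deriv f s) / lam c ((f s).1 - q) := by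
  have key : ∫ _s in α..β, gamma0 v / l
      ≤ ∫ s in α..β, gamma0 (deriv f s) / lam c ((f s).1 - q) := by
    refine intervalIntegral.integral_mono_on_of_le_Ioo hαβ intervalIntegrable_const
      (passage_integrable hc q hf hV hα hαβ hβ) ?_
    intro s hs
    rw [hv s hs]
    exact div_le_div_of_nonneg_left (gamma0_nonneg _) (lam_pos hc _) (hl s hs)
  rwa [intervalIntegral.integral_const, smul_eq_mul] at key

/-- Every continuous function on `[0,T]` splits at its first and last zero `a ≤ b`: the rate is `1`
outside `[a,b]` and at least `m = c` inside. A function without zeros is covered by `m = 1`. -/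
lemma exists_zero_split {X : ℝ → ℝ} {T : ℝ} (hT : 0 ≤ T) (hX : ContinuousOn X (Icc 0 T)) :
    ∃ a b m, 0 ≤ a ∧ a ≤ b ∧ b ≤ T ∧ m ∈ Ioc (0 : ℝ) 1 ∧ (m = 1 ∨ m = c ∧ X a = 0 ∧ X b = 0) ∧
      (∀ s ∈ Ioo 0 a, 1 ≤ lam c (X s)) ∧ (∀ s ∈ Ioo a b, m ≤ lam c (X s)) ∧
      (∀ s ∈ Ioo b T, 1 ≤ lam c (X s)) := by
  have hone : ∀ s, X s ≠ 0 → 1 ≤ lam c (X s) := fun s hs => by simp [lam, hs]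
  set Z := Icc 0 T ∩ X ⁻¹' {0}
  have hZ : IsCompact Z :=
    isCompact_Icc.of_isClosed_subset (hX.preimage_isClosed_of_isClosed isClosed_Icc
      isClosed_singleton) inter_subset_left
  rcases Z.eq_empty_or_nonempty with hemp | hne
  · have hnz : ∀ s ∈ Icc 0 T, X s ≠ 0 := fun s hs h0 => by
      have : s ∈ Z := ⟨hs, h0⟩
      simp [hemp] at this
    exact ⟨0, T, 1, le_rfl, hT, le_rfl, by simp, Or.inl rfl, by simp,
      fun s hs => hone s (hnz s (Ioo_subset_Icc_self hs)), by simp⟩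
  · obtain ⟨a, haZ, ha⟩ := hZ.exists_isLeast hne
    obtain ⟨b, hbZ, hb⟩ := hZ.exists_isGreatest hne
    refine ⟨a, b, c, haZ.1.1, ha hbZ, hbZ.1.2, hc, Or.inr ⟨rfl, haZ.2, hbZ.2⟩, ?_,
      fun s _ => lam_ge hc _, ?_⟩
    · intro s hs
      refine hone s (fun h0 => ?_)
      exact absurd (ha ⟨⟨hs.1.le, hs.2.le.trans haZ.1.2⟩, h0⟩) (not_le.2 hs.2)
    · intro s hs
      refine hone s (fun h0 => ?_)
      exact absurd (hb ⟨⟨hbZ.1.1.trans hs.1.le, hs.2.le⟩, h0⟩) (not_le.2 hs.1)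

end Integrals

/-! ### The wedge and lower bounds for `Γ` -/

lemma wedge_add {d d' : ℝ × ℝ} (h : d ∈ WedgeV) (h' : d' ∈ WedgeV) : d + d' ∈ WedgeV := by
  obtain ⟨h1, h2⟩ := h
  obtain ⟨h3, h4⟩ := h'
  exact ⟨by simp only [Prod.snd_add]; linarith,
    by simp only [Prod.snd_add, Prod.fst_add]; linarith⟩

lemma wedge_smul {d : ℝ × ℝ} (h : d ∈ WedgeV) {r : ℝ} (hr : 0 ≤ r) : r • d ∈ WedgeV := by
  obtain ⟨h1, h2⟩ := h
  refine ⟨mul_nonneg hr h1, ?_⟩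
  have := mul_le_mul_of_nonneg_left h2 hr
  simp only [Prod.smul_snd, Prod.smul_fst, smul_eq_mul]
  linarith

lemma wedge_zero : (0 : ℝ × ℝ) ∈ WedgeV := by simp [WedgeV]

/-- The cases `σ = 0` and `σ = 1` of the dual inequalities are the two sides of the wedge. -/
lemma wedge_of_dual {x y m : ℝ}
    (h : ∀ σ ∈ Icc (0 : ℝ) 1, m * (σ * (1 - σ)) - σ * x ≤ y) : (x, y) ∈ WedgeV := by
  have h0 := h 0 (by simp)
  have h1 := h 1 (by simp)
  norm_num at h0 h1
  exact ⟨h0, by simp only; linarith⟩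

section Main

variable {c : ℝ} (hc : c ∈ Ioc (0 : ℝ) 1)

include hc

/-- The supremum that defines `Γ` is finite, so it is not the default value `0` of `sSup`. -/
lemma gammaQ_bddAbove (q x y : ℝ) :
    BddAbove { a | ∃ f : ℝ → ℝ × ℝ, PiecewiseC1PathOn f 0 1 ∧ f 0 = (0, 0) ∧ f 1 = (x, y) ∧
      (∀ s ∈ Set.Icc (0 : ℝ) 1, f s ∈ WedgeV) ∧
      (∀ s ∈ Set.Icc (0 : ℝ) 1, deriv f s ∈ WedgeV) ∧
      a = ∫ s in (0 : ℝ)..1, gamma0 (deriv f s) / lam c ((f s).1 - q) } := by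
  refine ⟨(4 * y + 2 * x) / c, ?_⟩
  rintro _ ⟨f, hf, hf0, hf1, -, hV, rfl⟩
  have h := passage_integral_le hc q (f := f) hf hV (σ := 1 / 2) le_rfl zero_le_one le_rfl hc.1
    (fun s _ => lam_ge hc _) (by norm_num)
  rw [hf0, hf1] at h
  rw [le_div_iff₀ hc.1]
  simp only at h
  linarith

/-- A path made of three segments bounds `Γ` from below; if its middle segment runs along the slow
line, it contributes with the rate `m = c`. -/
lemma le_gammaQ {q m : ℝ} {d₁ d₂ d₃ : ℝ × ℝ} (h₁ : d₁ ∈ WedgeV) (h₂ : d₂ ∈ WedgeV)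
    (h₃ : d₃ ∈ WedgeV) (hm : m = 1 ∨ m = c ∧ d₁.1 = q ∧ d₂.1 = 0) :
    gamma0 d₁ + gamma0 d₂ / m + gamma0 d₃
      ≤ GammaQ c q (d₁.1 + d₂.1 + d₃.1) (d₁.2 + d₂.2 + d₃.2) := by
  have p₁ : (0 : ℝ) < 1 / 3 := by norm_num
  have p₂ : (1 / 3 : ℝ) < 2 / 3 := by norm_num
  have p₃ : (2 / 3 : ℝ) < 1 := by norm_num
  have n3 : (0 : ℝ) ≤ 3 := by norm_num
  set f := threeLine (0 : ℝ × ℝ) ((3 : ℝ) • d₁) ((3 : ℝ) • d₂) ((3 : ℝ) • d₃) (1 / 3) (2 / 3) 1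
    with hf
  have hpc : PC1 f 0 1 := threeLine_pc1 p₁ p₂ p₃
  have hV : ∀ s ∈ Icc (0 : ℝ) 1, deriv f s ∈ WedgeV := by
    intro s hs
    have := threeLine_deriv (e := (0 : ℝ × ℝ)) (v₁ := (3 : ℝ) • d₁) (v₂ := (3 : ℝ) • d₂)
      (v₃ := (3 : ℝ) • d₃) p₁ p₂ p₃ hs
    simp only [mem_insert_iff, mem_singleton_iff] at this
    rcases this with h | h | h | h <;> rw [hf, h]
    exacts [wedge_smul h₁ n3, wedge_smul h₂ n3, wedge_smul h₃ n3, wedge_zero]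
  have c₁ : ∀ s ∈ Icc (0 : ℝ) (1 / 3), f s = _ := fun s hs => threeLine_cell₁ p₂ hs
  have c₂ : ∀ s ∈ Icc (1 / 3 : ℝ) (2 / 3), f s = _ := fun s hs => threeLine_cell₂ p₁ hs
  have c₃ : ∀ s ∈ Icc (2 / 3 : ℝ) 1, f s = _ := fun s hs => threeLine_cell₃ p₁ p₂ hs
  have hramp : ∀ a b s : ℝ, 0 ≤ ramp a b s := fun a b s => sub_nonneg.2 (le_max_left _ _)
  have i₁ := passage_integral_ge hc q hpc hV (l := 1) (v := (3 : ℝ) • d₁) le_rfl p₁.le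
    (by norm_num) (fun s hs => (deriv_of_affine p₁ c₁ (Ioo_subset_Icc_self hs)).1 hs)
    (fun s _ => lam_le hc _)
  have i₂ := passage_integral_ge hc q hpc hV (l := m) (v := (3 : ℝ) • d₂) p₁.le p₂.le
    (by norm_num) (fun s hs => (deriv_of_affine p₂ c₂ (Ioo_subset_Icc_self hs)).1 hs)
    (by
      intro s hs
      rcases hm with rfl | ⟨rfl, hq, h0⟩
      · exact lam_le hc _
      · rw [c₂ s (Ioo_subset_Icc_self hs)]
        simp [lam, h0, hq])
  have i₃ := passage_integral_ge hc q hpc hV (l := 1) (v := (3 : ℝ) • d₃) (by norm_num) p₃.le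
    le_rfl (fun s hs => (deriv_of_affine p₃ c₃ (Ioo_subset_Icc_self hs)).1 hs)
    (fun s _ => lam_le hc _)
  rw [gamma0_smul n3] at i₁ i₂ i₃
  have hmem : (∫ s in (0 : ℝ)..1, gamma0 (deriv f s) / lam c ((f s).1 - q))
      ≤ GammaQ c q (d₁.1 + d₂.1 + d₃.1) (d₁.2 + d₂.2 + d₃.2) := by
    refine le_csSup (gammaQ_bddAbove hc _ _ _) ⟨f, hpc, ?_, ?_, ?_, hV, rfl⟩
    · rw [c₁ 0 (by norm_num)]
      simp
      rfl
    · rw [c₃ 1 (by norm_num)]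
      ext <;> simp <;> ring
    · intro s _
      simp only [hf, threeLine, zero_add]
      exact wedge_add (wedge_add (wedge_smul (wedge_smul h₁ n3) (hramp _ _ _))
        (wedge_smul (wedge_smul h₂ n3) (hramp _ _ _)))
        (wedge_smul (wedge_smul h₃ n3) (hramp _ _ _))
  have hint := fun {α β : ℝ} => passage_integrable hc q hpc hV (α := α) (β := β)
  rw [← intervalIntegral.integral_add_adjacent_intervals
      (hint (by norm_num) (by norm_num) (by norm_num) : IntervalIntegrable _ _ _ (2 / 3))
      (hint (by norm_num) (by norm_num) (by norm_num)),
    ← intervalIntegral.integral_add_adjacent_intervals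
      (hint (by norm_num) (by norm_num) (by norm_num) : IntervalIntegrable _ _ _ (1 / 3))
      (hint (by norm_num) (by norm_num) (by norm_num))] at hmem
  have e₂ : (2 / 3 - 1 / 3 : ℝ) * (3 * gamma0 d₂ / m) = gamma0 d₂ / m := by ring
  rw [e₂] at i₂
  linarith

/-! ### Comparison of the control cost with the level sets of `Γ` -/

/-- A control `w` with cost `y` certifies that `y` belongs to the superlevel set of `Γ`. -/
lemma mem_level_of_control {w : ℝ → ℝ} {t : ℝ} (ht : 0 < t) (hw : PC1 w 0 t) :
    ((w t - w 0, pathCost c t w) : ℝ × ℝ) ∈ WedgeV ∧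
      t ≤ GammaQ c (-(w 0)) (w t - w 0) (pathCost c t w) := by
  obtain ⟨a, b, m, ha, hab, hb, hm, hma, k₁, k₂, k₃⟩ := exists_zero_split hc ht.le hw.1
  have j₁ := fun σ hσ => cost_integral_ge hc hw (σ := σ) le_rfl ha (hab.trans hb) k₁ hσ
  have j₂ := fun σ hσ => cost_integral_ge hc hw (σ := σ) ha hab hb k₂ hσ
  have j₃ := fun σ hσ => cost_integral_ge hc hw (σ := σ) (ha.trans hab) hb le_rfl k₃ hσ
  have hsum : pathCost c t w = _ :=
    (intervalIntegral.integral_add_adjacent_intervals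
      (cost_integrable hc hw le_rfl (ha.trans hab) hb)
      (cost_integrable hc hw (ha.trans hab) hb le_rfl)).symm
  rw [← intervalIntegral.integral_add_adjacent_intervals
      (cost_integrable hc hw le_rfl ha (hab.trans hb))
      (cost_integrable hc hw ha hab hb)] at hsum
  set y₁ := ∫ s in (0 : ℝ)..a, lam c (w s) * g0 (deriv w s / lam c (w s))
  set y₂ := ∫ s in a..b, lam c (w s) * g0 (deriv w s / lam c (w s))
  set y₃ := ∫ s in b..t, lam c (w s) * g0 (deriv w s / lam c (w s))
  have v₁ := wedge_of_dual j₁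
  have v₂ := wedge_of_dual j₂
  have v₃ := wedge_of_dual j₃
  have g₁ := le_gamma0 j₁
  have g₂ := le_gamma0 j₂
  have g₃ := le_gamma0 j₃
  have hΓ := le_gammaQ hc (q := -(w 0)) (m := m) v₁ v₂ v₃ (by
    rcases hma with h | ⟨h, h0, h1⟩
    · exact Or.inl h
    · exact Or.inr ⟨h, by simp [h0], by simp [h0, h1]⟩)
  have hV := wedge_add (wedge_add v₁ v₂) v₃
  have ex : w a - w 0 + (w b - w a) + (w t - w b) = w t - w 0 := by ring
  simp only [Prod.mk_add_mk, ex, ← hsum] at hΓ hV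
  refine ⟨hV, le_trans ?_ hΓ⟩
  have := (le_div_iff₀ hm.1).2 g₂
  linarith

/-- If `y` belongs to the superlevel set of `Γ`, there are controls with cost at most `y + ε`. -/
lemma exists_control {q x y t ε : ℝ} (ht : 0 < t) (hε : 0 < ε)
    (hy : t ≤ GammaQ c (-q) (x - q) y) :
    ∃ w : ℝ → ℝ, PC1 w 0 t ∧ w 0 = q ∧ w t = x ∧ pathCost c t w ≤ y + ε := by
  obtain ⟨δ, hδ, hδε⟩ : ∃ δ, 0 < δ ∧ 3 * δ = ε := ⟨ε / 3, by linarith, by ring⟩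
  -- `sSup ∅ = 0 < t`, so the set of passage times is nonempty.
  have hne : Set.Nonempty { a | ∃ f : ℝ → ℝ × ℝ, PiecewiseC1PathOn f 0 1 ∧ f 0 = (0, 0) ∧
      f 1 = (x - q, y) ∧ (∀ s ∈ Set.Icc (0 : ℝ) 1, f s ∈ WedgeV) ∧
      (∀ s ∈ Set.Icc (0 : ℝ) 1, deriv f s ∈ WedgeV) ∧
      a = ∫ s in (0 : ℝ)..1, gamma0 (deriv f s) / lam c ((f s).1 - -q) } := by
    by_contra h
    rw [not_nonempty_iff_eq_empty] at h
    rw [GammaQ, h, Real.sSup_empty] at hy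
    linarith
  obtain ⟨_, ⟨f, hf, hf0, hf1, -, hV, rfl⟩, hA⟩ :=
    exists_lt_of_lt_csSup hne (show t - δ < GammaQ c (-q) (x - q) y by linarith)
  replace hf : PC1 f 0 1 := hf
  obtain ⟨a, b, m, ha, hab, hb, hm, hma, k₁, k₂, k₃⟩ := exists_zero_split hc zero_le_one
    (X := fun s => (f s).1 - -q) (hf.1.fst.sub continuousOn_const)
  have j₁ := fun σ hσ => passage_integral_le hc (-q) hf hV (σ := σ) le_rfl ha (hab.trans hb)
    one_pos k₁ hσ
  have j₂ := fun σ hσ => passage_integral_le hc (-q) hf hV (σ := σ) ha hab hb hm.1 k₂ hσ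
  have j₃ := fun σ hσ => passage_integral_le hc (-q) hf hV (σ := σ) (ha.trans hab) hb le_rfl
    one_pos k₃ hσ
  have hint := fun {α β : ℝ} => passage_integrable hc (-q) hf hV (α := α) (β := β)
  rw [← intervalIntegral.integral_add_adjacent_intervals (hint le_rfl (ha.trans hab) hb)
      (hint (ha.trans hab) hb le_rfl),
    ← intervalIntegral.integral_add_adjacent_intervals (hint le_rfl ha (hab.trans hb))
      (hint ha hab hb)] at hA
  have hnn : ∀ α β : ℝ, α ≤ β →
      0 ≤ ∫ s in α..β, gamma0 (deriv f s) / lam c ((f s).1 - -q) := fun α β h =>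
    intervalIntegral.integral_nonneg h
      (fun s _ => div_nonneg (gamma0_nonneg _) (lam_pos hc _).le)
  have n₁ := hnn 0 a ha
  have n₂ := hnn a b hab
  have n₃ := hnn b 1 hb
  set τ₁ := ∫ s in (0 : ℝ)..a, gamma0 (deriv f s) / lam c ((f s).1 - -q)
  set τ₂ := ∫ s in a..b, gamma0 (deriv f s) / lam c ((f s).1 - -q)
  set τ₃ := ∫ s in b..1, gamma0 (deriv f s) / lam c ((f s).1 - -q)
  rw [hf0] at j₁
  rw [hf1] at j₃
  -- Lengthening each time by `δ` makes all times positive with total above `t`; shrinking them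
  -- by the factor `r < 1` gives total `t` without raising the cost.
  set r := t / (τ₁ + τ₂ + τ₃ + 3 * δ) with hr
  have hS : 0 < τ₁ + τ₂ + τ₃ + 3 * δ := by linarith
  have hr0 : 0 < r := div_pos ht hS
  have hr1 : r ≤ 1 := (div_le_one hS).2 (by linarith)
  have hT : r * (τ₁ + δ) + r * (τ₂ + δ) + r * (τ₃ + δ) = t := by
    rw [hr]; field_simp; ring
  have adjust : ∀ τ l X Y σ : ℝ, 0 ≤ τ → l ∈ Ioc (0 : ℝ) 1 → σ ∈ Icc (0 : ℝ) 1 →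
      τ * l * (σ * (1 - σ)) - σ * X ≤ Y →
      r * (τ + δ) * l * (σ * (1 - σ)) - σ * X ≤ Y + δ := by
    intro τ l X Y σ hτ hl hσ h
    have hσ0 : 0 ≤ σ * (1 - σ) := mul_nonneg hσ.1 (sub_nonneg.2 hσ.2)
    have hσ1 : σ * (1 - σ) ≤ 1 := by nlinarith [hσ.1, hσ.2]
    have hp0 : 0 ≤ l * (σ * (1 - σ)) := mul_nonneg hl.1.le hσ0
    have hp1 : l * (σ * (1 - σ)) ≤ 1 := mul_le_one₀ hl.2 hσ0 hσ1
    have e1 : r * (τ + δ) ≤ τ + δ := mul_le_of_le_one_left (by linarith) hr1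
    have e2 := mul_le_mul_of_nonneg_right e1 hp0
    have e3 := mul_le_of_le_one_right hδ.le hp1
    linarith
  have P₁ : 0 < r * (τ₁ + δ) := mul_pos hr0 (by linarith)
  have P₂ : 0 < r * (τ₂ + δ) := mul_pos hr0 (by linarith)
  have P₃ : 0 < r * (τ₃ + δ) := mul_pos hr0 (by linarith)
  have one_mem : (1 : ℝ) ∈ Ioc (0 : ℝ) 1 := by simp
  have J₁ := fun σ hσ => adjust _ _ _ _ σ n₁ one_mem hσ (j₁ σ hσ)
  have J₂ := fun σ hσ => adjust _ _ _ _ σ n₂ hm hσ (j₂ σ hσ)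
  have J₃ := fun σ hσ => adjust _ _ _ _ σ n₃ one_mem hσ (j₃ σ hσ)
  set T₁ := r * (τ₁ + δ)
  set T₂ := r * (τ₂ + δ)
  set T₃ := r * (τ₃ + δ)
  simp only [sub_zero] at J₁
  set x₁ := (f a).1
  set x₂ := (f b).1 - (f a).1 with hx₂
  set x₃ := x - q - (f b).1 with hx₃
  have p₁ : 0 < T₁ := P₁
  have p₂ : T₁ < T₁ + T₂ := by linarith
  have p₃ : T₁ + T₂ < t := by linarith
  set w := threeLine q (x₁ / T₁) (x₂ / T₂) (x₃ / T₃) T₁ (T₁ + T₂) t with hw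
  have hpc : PC1 w 0 t := threeLine_pc1 p₁ p₂ p₃
  have c₁ : ∀ s ∈ Icc (0 : ℝ) T₁, w s = _ := fun s hs => threeLine_cell₁ p₂ hs
  have c₂ : ∀ s ∈ Icc T₁ (T₁ + T₂), w s = _ := fun s hs => threeLine_cell₂ p₁ hs
  have c₃ : ∀ s ∈ Icc (T₁ + T₂) t, w s = _ := fun s hs => threeLine_cell₃ p₁ p₂ hs
  refine ⟨w, hpc, ?_, ?_, ?_⟩
  · rw [c₁ 0 (by simp [p₁.le])]
    simp
  · rw [c₃ t (by simp [p₃.le])]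
    have e₁ : T₁ * (x₁ / T₁) = x₁ := mul_div_cancel₀ _ P₁.ne'
    have e₂ : T₂ * (x₂ / T₂) = x₂ := mul_div_cancel₀ _ P₂.ne'
    have e₃ : T₃ * (x₃ / T₃) = x₃ := mul_div_cancel₀ _ P₃.ne'
    have et : t = T₁ + T₂ + T₃ := hT.symm
    simp only [smul_eq_mul, et]
    linear_combination e₁ + e₂ + e₃ + hx₂ + hx₃
  · have i₁ := cost_integral_le hc hpc (l := 1) (v := x₁ / T₁) le_rfl p₁ (by linarith)
      (fun s hs => (deriv_of_affine p₁ c₁ (Ioo_subset_Icc_self hs)).1 hs)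
      (fun s _ => lam_le hc _)
      (fun σ hσ => by
        rw [sub_zero, mul_div_cancel₀ _ P₁.ne']
        exact J₁ σ hσ)
    have i₂ := cost_integral_le hc hpc (l := m) (v := x₂ / T₂) p₁.le p₂ p₃.le
      (fun s hs => (deriv_of_affine p₂ c₂ (Ioo_subset_Icc_self hs)).1 hs)
      (by
        intro s hs
        rcases hma with h | ⟨h, h0, h1⟩
        · rw [h]
          exact lam_le hc _
        · have hx₁ : x₁ = -q := by linarith
          have hx₂0 : x₂ = 0 := by linarith
          rw [c₂ s (Ioo_subset_Icc_self hs), hx₂0, hx₁, h]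
          have : q + T₁ * (-q / T₁) = 0 := by field_simp; ring
          simp [lam, this])
      (fun σ hσ => by
        rw [add_sub_cancel_left, mul_div_cancel₀ _ P₂.ne']
        exact J₂ σ hσ)
    have i₃ := cost_integral_le hc hpc (l := 1) (v := x₃ / T₃) (by linarith) p₃ le_rfl
      (fun s hs => (deriv_of_affine p₃ c₃ (Ioo_subset_Icc_self hs)).1 hs)
      (fun s _ => lam_le hc _)
      (fun σ hσ => by
        rw [show t - (T₁ + T₂) = T₃ by linarith, mul_div_cancel₀ _ P₃.ne']
        exact J₃ σ hσ)
    rw [pathCost, ← intervalIntegral.integral_add_adjacent_intervals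
        (cost_integrable hc hpc le_rfl (by linarith) p₃.le)
        (cost_integrable hc hpc (by linarith) p₃.le le_rfl),
      ← intervalIntegral.integral_add_adjacent_intervals
        (cost_integrable hc hpc le_rfl p₁.le (by linarith))
        (cost_integrable hc hpc p₁.le p₂.le p₃.le)]
    linarith

end Main

/-! ### The supremum over initial points -/

/-- Each candidate `v₀(q) - y` with `(x - q, y)` in the wedge is at most `v₀(x)`; this bounds both
variational formulas. -/
lemma sub_le_of_wedge {v0 : ℝ → ℝ} (hmono : Monotone v0) (hlip : LipschitzWith 1 v0)
    {q x y : ℝ} (h : ((x - q, y) : ℝ × ℝ) ∈ WedgeV) : v0 q - y ≤ v0 x := by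
  obtain ⟨h1, h2⟩ := h
  simp only at h1 h2
  rcases le_total q x with hq | hq
  · linarith [hmono hq]
  · have := hlip.dist_le_mul q x
    rw [Real.dist_eq, Real.dist_eq, NNReal.coe_one, one_mul, abs_of_nonneg (sub_nonneg.2 hq)]
      at this
    linarith [le_abs_self (v0 q - v0 x)]

/-- Constant-speed controls. -/
lemma exists_pc1 (q x : ℝ) {t : ℝ} (ht : 0 < t) : ∃ w : ℝ → ℝ, PC1 w 0 t ∧ w 0 = q ∧ w t = x := by
  refine ⟨fun s => q + s * ((x - q) / t), ⟨by fun_prop, 1, fun i => i * t, by simp, by simp, ?_, ?_⟩,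
    by simp, by field_simp; ring⟩
  · intro i _
    simp only
    push_cast
    linarith
  · intro i _
    fun_prop

/-- Proposition 4.3: the two variational formulas agree:
`v(x,t) = ṽ(x,t) = sup_q { v₀(q) − g^{−q}(x−q, t) }`. -/
theorem vVar_eq_levelSet_formula
    (c : ℝ) (hc : c ∈ Set.Ioc (0 : ℝ) 1)
    (v0 : ℝ → ℝ) (hmono : Monotone v0) (hlip : LipschitzWith 1 v0)
    (x t : ℝ) (ht : 0 < t) :
    vVar c v0 x t = sSup { a | ∃ q : ℝ, a = v0 q - gLevel c (-q) (x - q) t } := by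
  have hvbdd : BddAbove
      { a | ∃ w : ℝ → ℝ, PiecewiseC1On w 0 t ∧ w t = x ∧ a = v0 (w 0) - pathCost c t w } := by
    refine ⟨v0 x, ?_⟩
    rintro _ ⟨w, hw, rfl, rfl⟩
    exact sub_le_of_wedge hmono hlip (mem_level_of_control hc ht hw).1
  have hne : ∀ q, Set.Nonempty
      { y | ((x - q, y) : ℝ × ℝ) ∈ WedgeV ∧ t ≤ GammaQ c (-q) (x - q) y } := by
    intro q
    obtain ⟨w, hw, rfl, rfl⟩ := exists_pc1 q x ht
    exact ⟨_, mem_level_of_control hc ht hw⟩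
  have hgbdd : BddAbove { a | ∃ q : ℝ, a = v0 q - gLevel c (-q) (x - q) t } := by
    refine ⟨v0 x, ?_⟩
    rintro _ ⟨q, rfl⟩
    have : v0 q - v0 x ≤ gLevel c (-q) (x - q) t :=
      le_csInf (hne q) fun y hy => by linarith [sub_le_of_wedge hmono hlip hy.1]
    linarith
  apply le_antisymm
  · refine csSup_le ?_ ?_
    · obtain ⟨w, hw, -, hx⟩ := exists_pc1 x x ht
      exact ⟨_, w, hw, hx, rfl⟩
    · rintro _ ⟨w, hw, rfl, rfl⟩
      refine le_trans ?_ (le_csSup hgbdd ⟨w 0, rfl⟩)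
      have : gLevel c (-(w 0)) (w t - w 0) t ≤ pathCost c t w :=
        csInf_le ⟨0, fun y hy => hy.1.1⟩ (mem_level_of_control hc ht hw)
      linarith
  · refine csSup_le ⟨_, 0, rfl⟩ ?_
    rintro _ ⟨q, rfl⟩
    have : v0 q - vVar c v0 x t ≤ gLevel c (-q) (x - q) t := by
      refine le_csInf (hne q) fun y hy => ?_
      refine le_of_forall_pos_le_add fun ε hε => ?_
      obtain ⟨w, hw, h0, hx, hcost⟩ := exists_control hc ht hε hy.2
      have : v0 (w 0) - pathCost c t w ≤ vVar c v0 x t := le_csSup hvbdd ⟨w, hw, hx, rfl⟩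
      rw [h0] at this
      linarith
    linarith
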